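/- arXiv:2210.05653 — 3 statements merged into one kernel-verified Lean document; each statement's English description precedes it below -/
import Mathlib

section
/- Let K be a field, n ≥ 2, and let f(x_1,…,x_m) be a multilinear polynomial over K. Then f is a polynomial identity for M_n(K) (i.e., f(a_1,…,a_m) = 0 for all a_1,…,a_m ∈ M_n(K)) if and only if f satisfies (S0). -/
/-- Evaluation of the multilinear polynomial `f(x₁,…,x_m) = ∑_{σ ∈ S_m} α_σ x_{σ(1)}⋯x_{σ(m)}`
given by coefficients `α` at the tuple `a`. -/
def mlEval {K A : Type} [Field K] [Ring A] [Algebra K A] {m : ℕ}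
    (α : Equiv.Perm (Fin m) → K) (a : Fin m → A) : A :=
  ∑ σ : Equiv.Perm (Fin m), α σ • (List.ofFn fun i => a (σ i)).prod

/-- The image of the multilinear polynomial with coefficients `α` on the algebra `A`. -/
def mlImage {K A : Type} [Field K] [Ring A] [Algebra K A] {m : ℕ}
    (α : Equiv.Perm (Fin m) → K) : Set A :=
  Set.range (mlEval α)

/-- `a` is homogeneous of degree `g` in the Vasilovsky `ZMod n`-grading of `Mₙ(K)`:
`a` lies in the span of the matrix units `E i j` with `j - i ≡ g (mod n)`. -/
def VasHomog {K : Type} [Field K] {n : ℕ} (g : ZMod n)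
    (a : Matrix (Fin n) (Fin n) K) : Prop :=
  ∀ i j : Fin n, ((j.val : ZMod n) - (i.val : ZMod n)) ≠ g → a i j = 0

/-- Statement (S0): `f` vanishes on homogeneous tuples whose degrees sum to `0`. -/
def StmtS0 {K : Type} [Field K] (n : ℕ) {m : ℕ} (α : Equiv.Perm (Fin m) → K) : Prop :=
  ∀ (g : Fin m → ZMod n) (a : Fin m → Matrix (Fin n) (Fin n) K),
    (∀ i, VasHomog (g i) (a i)) → (∑ i, g i) = 0 → mlEval α a = 0

/-- Statement (S1): `f` vanishes on homogeneous tuples whose degrees sum to a nonzero element. -/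
def StmtS1 {K : Type} [Field K] (n : ℕ) {m : ℕ} (α : Equiv.Perm (Fin m) → K) : Prop :=
  ∀ (g : Fin m → ZMod n) (a : Fin m → Matrix (Fin n) (Fin n) K),
    (∀ i, VasHomog (g i) (a i)) → (∑ i, g i) ≠ 0 → mlEval α a = 0

/-- Statement (S2): `f` has trace-zero values on homogeneous tuples whose degrees sum to `0`. -/
def StmtS2 {K : Type} [Field K] (n : ℕ) {m : ℕ} (α : Equiv.Perm (Fin m) → K) : Prop :=
  ∀ (g : Fin m → ZMod n) (a : Fin m → Matrix (Fin n) (Fin n) K),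
    (∀ i, VasHomog (g i) (a i)) → (∑ i, g i) = 0 → Matrix.trace (mlEval α a) = 0

/-- The set of scalar matrices in `Mₙ(K)`. -/
def scalarSet (K : Type) [Field K] (n : ℕ) : Set (Matrix (Fin n) (Fin n) K) :=
  {b | ∃ c : K, b = c • (1 : Matrix (Fin n) (Fin n) K)}

/-- The set `slₙ(K)` of trace-zero matrices in `Mₙ(K)`. -/
def slSet (K : Type) [Field K] (n : ℕ) : Set (Matrix (Fin n) (Fin n) K) :=
  {b | Matrix.trace b = 0}

theorem aux_conj {A : Type} [Ring A] (P Q : A) (h : P * Q = 1) (h' : Q * P = 1) :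
    ∀ (m : ℕ) (a : Fin m → A),
      (List.ofFn fun i => P * a i * Q).prod = P * (List.ofFn a).prod * Q := by
  intro m
  induction m with
  | zero => intro a; simp [h]
  | succ k ih =>
    intro a
    rw [List.ofFn_succ, List.prod_cons, ih, List.ofFn_succ, List.prod_cons]
    calc P * a 0 * Q * (P * (List.ofFn fun i : Fin k => a i.succ).prod * Q)
        = P * a 0 * (Q * P) * (List.ofFn fun i : Fin k => a i.succ).prod * Q := by
          simp only [mul_assoc]
      _ = _ := by rw [h']; simp only [mul_assoc, one_mul, mul_one]

theorem aux_mlEval_conj {K A : Type} [Field K] [Ring A] [Algebra K A] {m : ℕ}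
    (α : Equiv.Perm (Fin m) → K) (P Q : A) (h : P * Q = 1) (h' : Q * P = 1) (a : Fin m → A) :
    mlEval α (fun i => P * a i * Q) = P * mlEval α a * Q := by
  unfold mlEval
  rw [Finset.mul_sum, Finset.sum_mul]
  refine Finset.sum_congr rfl fun σ _ => ?_
  rw [aux_conj P Q h h' m (fun i => a (σ i))]
  simp

theorem aux_homog_prod {K : Type} [Field K] {n : ℕ} : ∀ (m : ℕ) (g : Fin m → ZMod n)
    (a : Fin m → Matrix (Fin n) (Fin n) K), (∀ i, VasHomog (g i) (a i)) →
    VasHomog (∑ i, g i) (List.ofFn a).prod := by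
  intro m
  induction m with
  | zero =>
    intro g a _ i j hij
    have : i ≠ j := by
      rintro rfl
      simp at hij
    simp [Matrix.one_apply_ne this]
  | succ k ih =>
    intro g a ha i j hij
    rw [List.ofFn_succ, List.prod_cons, Matrix.mul_apply]
    refine Finset.sum_eq_zero fun l _ => ?_
    by_cases h1 : ((l.val : ZMod n) - (i.val : ZMod n)) = g 0
    · rw [ih (fun i => g i.succ) (fun i => a i.succ) (fun i => ha i.succ) l j, mul_zero]
      intro h2
      apply hij
      rw [Fin.sum_univ_succ, ← h1, ← h2]
      ring
    · rw [ha 0 i l h1, zero_mul]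

/-- The evaluation as a multilinear map. -/
noncomputable def auxML {K A : Type} [Field K] [Ring A] [Algebra K A] {m : ℕ}
    (α : Equiv.Perm (Fin m) → K) : MultilinearMap K (fun _ : Fin m => A) A :=
  ∑ σ : Equiv.Perm (Fin m), α σ • (MultilinearMap.mkPiAlgebraFin K m A).domDomCongr σ

theorem auxML_apply {K A : Type} [Field K] [Ring A] [Algebra K A] {m : ℕ}
    (α : Equiv.Perm (Fin m) → K) (a : Fin m → A) : auxML α a = mlEval α a := by
  simp [auxML, mlEval, MultilinearMap.sum_apply]

theorem aux_diag {K : Type} [Field K] (n : ℕ) [NeZero n] {m : ℕ}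
    (α : Equiv.Perm (Fin m) → K) (h : StmtS0 n α)
    (a : Fin m → Matrix (Fin n) (Fin n) K) (p : Fin n) : mlEval α a p p = 0 := by
  classical
  let c : Fin m → ZMod n → Matrix (Fin n) (Fin n) K := fun k g =>
    Matrix.of fun i j => if ((j.val : ZMod n) - (i.val : ZMod n)) = g then a k i j else 0
  have hc : ∀ k g, VasHomog g (c k g) := by
    intro k g i j hij
    simp [c, hij]
  have hs : a = fun k => ∑ g, c k g := by
    funext k
    ext i j
    simp [c, Matrix.sum_apply]
  rw [← auxML_apply, hs, MultilinearMap.map_sum, Matrix.sum_apply]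
  refine Finset.sum_eq_zero fun g _ => ?_
  rw [auxML_apply]
  by_cases h0 : ∑ i, g i = 0
  · rw [h g _ (fun i => hc i (g i)) h0]; rfl
  · unfold mlEval
    rw [Matrix.sum_apply]
    refine Finset.sum_eq_zero fun σ _ => ?_
    rw [Matrix.smul_apply, aux_homog_prod m (fun i => g (σ i)) _ (fun i => hc (σ i) (g (σ i))),
      smul_zero]
    rw [Equiv.sum_comp σ g, sub_self]
    exact fun h => h0 h.symm

/-- a multilinear polynomial is a polynomial identity for `Mₙ(K)`
iff it satisfies (S0). -/
theorem stmt_0 {K : Type} [Field K] (n : ℕ) (hn : 2 ≤ n) {m : ℕ}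
    (α : Equiv.Perm (Fin m) → K) :
    (∀ a : Fin m → Matrix (Fin n) (Fin n) K, mlEval α a = 0) ↔ StmtS0 n α := by
  constructor
  · intro h g a _ _
    exact h a
  · intro h a
    haveI : NeZero n := ⟨by omega⟩
    ext p q
    by_cases hpq : p = q
    · subst hpq
      exact aux_diag n α h a p
    · have hE : Matrix.single q p (1 : K) * Matrix.single q p (1 : K) = 0 :=
        Matrix.single_mul_single_of_ne _ _ _ _ hpq _
      have h1 : (1 + Matrix.single q p (1 : K)) * (1 - Matrix.single q p (1 : K)) = 1 := by
        noncomm_ring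
        simp [hE]
      have h2 : (1 - Matrix.single q p (1 : K)) * (1 + Matrix.single q p (1 : K)) = 1 := by
        noncomm_ring
        simp [hE]
      have h3 := aux_diag n α h (fun i => (1 + Matrix.single q p (1 : K)) * a i *
        (1 - Matrix.single q p (1 : K))) q
      rw [aux_mlEval_conj α _ _ h1 h2] at h3
      have h4 := aux_diag n α h a q
      have hqp : q ≠ p := fun e => hpq e.symm
      simpa [mul_sub, add_mul, h4, hqp, hpq] using h3
end

section
/- Let K be a field, n ≥ 2, and let f(x_1,…,x_m) be a multilinear polynomial over K. Then f is a polynomial identity for M_n(K) if and only if for every family a_1,…,a_k of homogeneous matrices whose K-linear span is all of M_n(K), one has f(a_{i_1},…,a_{i_m}) = 0 for all choices i_1,…,i_m ∈ {1,…,k} such that deg(a_{i_1}) + ⋯ + deg(a_{i_m}) = 0 in Z/nZ. -/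
theorem VasHomog.list_prod {K : Type} [Field K] {n : ℕ} :
    ∀ {m : ℕ} (g : Fin m → ZMod n) (a : Fin m → Matrix (Fin n) (Fin n) K),
    (∀ i, VasHomog (g i) (a i)) → VasHomog (∑ i, g i) (List.ofFn a).prod := by
  intro m
  induction m with
  | zero =>
    intro g a _ i j hij
    simp only [List.ofFn_zero, List.prod_nil]
    apply Matrix.one_apply_ne
    rintro rfl
    simp at hij
  | succ m ih =>
    intro g a h i j hij
    rw [List.ofFn_succ, List.prod_cons, Matrix.mul_apply]
    apply Finset.sum_eq_zero
    intro l _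
    by_cases h1 : ((l.val : ZMod n) - (i.val : ZMod n)) = g 0
    · have h2 := ih (fun i => g i.succ) (fun i => a i.succ) (fun i => h i.succ) l j (by
        intro h3
        apply hij
        rw [Fin.sum_univ_succ, ← h1, ← h3]
        ring)
      rw [h2, mul_zero]
    · rw [h 0 i l h1, zero_mul]

/-- The multilinear map attached to `mlEval`. -/
noncomputable def mlMap {K A : Type} [Field K] [Ring A] [Algebra K A] {m : ℕ}
    (α : Equiv.Perm (Fin m) → K) : MultilinearMap K (fun _ : Fin m => A) A :=
  ∑ σ : Equiv.Perm (Fin m), α σ • (MultilinearMap.mkPiAlgebraFin K m A).domDomCongr σ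

theorem mlMap_apply {K A : Type} [Field K] [Ring A] [Algebra K A] {m : ℕ}
    (α : Equiv.Perm (Fin m) → K) (a : Fin m → A) : mlMap α a = mlEval α a := by
  simp [mlMap, mlEval]

theorem mlEval_conj {K A : Type} [Field K] [Ring A] [Algebra K A] {m : ℕ}
    (α : Equiv.Perm (Fin m) → K) (a : Fin m → A) (u : Aˣ) :
    mlEval α (fun i => (u : A) * a i * (↑u⁻¹ : A)) = u * mlEval α a * (↑u⁻¹ : A) := by
  simp only [mlEval, Finset.mul_sum, Finset.sum_mul]
  refine Finset.sum_congr rfl fun σ _ => ?_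
  rw [mul_smul_comm, smul_mul_assoc]
  congr 1
  have := map_list_prod (MulSemiringAction.toRingHom (ConjAct Aˣ) A (ConjAct.toConjAct u))
    (List.ofFn fun i => a (σ i))
  simp only [MulSemiringAction.toRingHom_apply, ConjAct.units_smul_def, ConjAct.ofConjAct_toConjAct,
    List.map_ofFn] at this
  rw [this]
  rfl

theorem diag_zero {K : Type} [Field K] (n : ℕ) {m : ℕ}
    (α : Equiv.Perm (Fin m) → K)
    (H : ∀ (k : ℕ) (a : Fin k → Matrix (Fin n) (Fin n) K) (g : Fin k → ZMod n),
        (∀ i, VasHomog (g i) (a i)) →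
        Submodule.span K (Set.range a) = ⊤ →
        ∀ idx : Fin m → Fin k, (∑ j, g (idx j)) = 0 →
          mlEval α (fun j => a (idx j)) = 0)
    (a : Fin m → Matrix (Fin n) (Fin n) K) (q : Fin n) : mlEval α a q q = 0 := by
  have key : (Matrix.entryLinearMap K K q q).compMultilinearMap
      (mlMap (A := Matrix (Fin n) (Fin n) K) α) = 0 := by
    refine Module.Basis.ext_multilinear (fun _ => Matrix.stdBasis K (Fin n) (Fin n)) fun v => ?_
    simp only [LinearMap.compMultilinearMap_apply, mlMap_apply, Matrix.entryLinearMap_apply,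
      zero_apply]
    let d : Fin n × Fin n → ZMod n := fun p => (p.2.val : ZMod n) - (p.1.val : ZMod n)
    have hd : ∀ p, VasHomog (d p) (Matrix.stdBasis K (Fin n) (Fin n) p) := by
      rintro ⟨i, j⟩ i' j' h
      rw [Matrix.stdBasis_eq_single]
      apply Matrix.single_apply_of_ne
      rintro ⟨rfl, rfl⟩
      exact h rfl
    by_cases h0 : ∑ j, d (v j) = 0
    · let e := Fintype.equivFin (Fin n × Fin n)
      have := H _ (fun i => Matrix.stdBasis K (Fin n) (Fin n) (e.symm i)) (fun i => d (e.symm i))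
        (fun i => hd _) (by
          rw [← (Matrix.stdBasis K (Fin n) (Fin n)).span_eq]
          congr 1
          exact e.symm.surjective.range_comp _) (fun j => e (v j)) (by simpa using h0)
      simp only [Equiv.symm_apply_apply] at this
      rw [this]; rfl
    · simp only [mlEval, Matrix.sum_apply, Matrix.smul_apply]
      refine Finset.sum_eq_zero fun σ _ => ?_
      rw [VasHomog.list_prod (fun i => d (v (σ i))) _ (fun i => hd _) q q, smul_zero]
      rw [Equiv.sum_comp σ (fun i => d (v i)), sub_self]
      exact fun h => h0 h.symm
  have := congrArg (fun f => f a) key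
  simpa [mlMap_apply] using this

/-- a multilinear polynomial is a polynomial identity for `Mₙ(K)` iff for every
family of homogeneous matrices spanning `Mₙ(K)`, it vanishes on all tuples from the family whose
degrees sum to zero. -/
theorem stmt_1 {K : Type} [Field K] (n : ℕ) (hn : 2 ≤ n) {m : ℕ}
    (α : Equiv.Perm (Fin m) → K) :
    (∀ a : Fin m → Matrix (Fin n) (Fin n) K, mlEval α a = 0) ↔
      (∀ (k : ℕ) (a : Fin k → Matrix (Fin n) (Fin n) K) (g : Fin k → ZMod n),
        (∀ i, VasHomog (g i) (a i)) →
        Submodule.span K (Set.range a) = ⊤ →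
        ∀ idx : Fin m → Fin k, (∑ j, g (idx j)) = 0 →
          mlEval α (fun j => a (idx j)) = 0) := by

  refine ⟨fun h k a g _ _ idx _ => h _, fun H a => ?_⟩
  ext p q
  have hdiag := diag_zero n α H
  by_cases hpq : p = q
  · subst hpq; exact hdiag a p
  have hz : Matrix.single q p (1 : K) * Matrix.single q p (1 : K) = 0 :=
    Matrix.single_mul_single_of_ne _ _ _ _ hpq _
  let u : (Matrix (Fin n) (Fin n) K)ˣ :=
    ⟨1 + Matrix.single q p 1, 1 - Matrix.single q p 1, by
      rw [add_mul, mul_sub, mul_sub, hz]; simp, by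
      rw [sub_mul, mul_add, mul_add, hz]; simp⟩
  have h1 := hdiag (fun i => (u : Matrix (Fin n) (Fin n) K) * a i * (↑u⁻¹ : Matrix (Fin n) (Fin n) K)) q
  rw [mlEval_conj] at h1
  have hu : (u : Matrix (Fin n) (Fin n) K) = 1 + Matrix.single q p 1 := rfl
  have hu' : ((u⁻¹ : _ˣ) : Matrix (Fin n) (Fin n) K) = 1 - Matrix.single q p 1 := rfl
  rw [hu, hu', mul_sub, mul_one, Matrix.sub_apply,
    Matrix.mul_single_apply_of_ne _ _ _ _ _ (Ne.symm hpq), sub_zero, add_mul, one_mul,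
    Matrix.add_apply, hdiag a q, zero_add, Matrix.single_mul_apply_same, one_mul] at h1
  simpa using h1
end

section
/- Let K be a field, n ≥ 2, and let f(x_1,…,x_m) be a multilinear polynomial over K. Then f does not satisfy (S1) and satisfies (S2) if and only if the K-linear span of Im(f) on M_n(K) equals sl_n(K). -/
theorem mlEval_hom {K A : Type} [Field K] [Ring A] [Algebra K A] {m : ℕ}
    (α : Equiv.Perm (Fin m) → K) (a : Fin m → A) (φ : A →ₐ[K] A) :
    φ (mlEval α a) = mlEval α (fun i => φ (a i)) := by
  simp [mlEval, map_sum, map_list_prod, List.map_ofFn, Function.comp_def]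

theorem mlEval_mem {K : Type} [Field K] {n m : ℕ} (α : Equiv.Perm (Fin m) → K)
    (W : Submodule K (Matrix (Fin n) (Fin n) K))
    (h : ∀ p : Fin m → Fin n × Fin n,
      mlEval α (fun k => Matrix.single (p k).1 (p k).2 (1 : K)) ∈ W)
    (a : Fin m → Matrix (Fin n) (Fin n) K) : mlEval α a ∈ W := by
  have ha : a = fun k => ∑ p : Fin n × Fin n, a k p.1 p.2 • Matrix.single p.1 p.2 (1 : K) := by
    funext k
    rw [Fintype.sum_prod_type]
    conv_lhs => rw [Matrix.matrix_eq_sum_single (a k)]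
    simp [Matrix.smul_single]
  rw [ha, ← mlMap_apply, MultilinearMap.map_sum]
  refine W.sum_mem fun p _ => ?_
  rw [MultilinearMap.map_smul_univ]
  refine W.smul_mem _ ?_
  rw [mlMap_apply]
  exact h p

/-- Elementary grading by a potential. -/
def HG {K G : Type} [Field K] [AddCommGroup G] {n : ℕ} (φ : Fin n → G) (g : G)
    (a : Matrix (Fin n) (Fin n) K) : Prop :=
  ∀ i j : Fin n, φ j - φ i ≠ g → a i j = 0

theorem HG_prod {K G : Type} [Field K] [AddCommGroup G] {n : ℕ} (φ : Fin n → G) {m : ℕ}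
    (g : Fin m → G) (a : Fin m → Matrix (Fin n) (Fin n) K) (h : ∀ i, HG φ (g i) (a i)) :
    HG φ (∑ i, g i) (List.ofFn a).prod := by
  induction m with
  | zero =>
    intro i j hij
    have : i ≠ j := by rintro rfl; simp at hij
    simp [Matrix.one_apply, this]
  | succ m ih =>
    intro i j hij
    rw [List.ofFn_succ, List.prod_cons, Matrix.mul_apply]
    refine Finset.sum_eq_zero fun k _ => ?_
    by_cases h1 : φ k - φ i = g 0
    · rw [ih (fun i => g i.succ) (fun i => a i.succ) (fun i => h _) k j, mul_zero]
      intro h2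
      apply hij
      rw [Fin.sum_univ_succ, ← h1, ← h2]
      abel
    · rw [h 0 i k h1, zero_mul]

theorem HG_eval {K G : Type} [Field K] [AddCommGroup G] {n : ℕ} (φ : Fin n → G) {m : ℕ}
    (α : Equiv.Perm (Fin m) → K)
    (g : Fin m → G) (a : Fin m → Matrix (Fin n) (Fin n) K) (h : ∀ i, HG φ (g i) (a i)) :
    HG φ (∑ i, g i) (mlEval α a) := by
  intro i j hij
  rw [mlEval, Matrix.sum_apply]
  refine Finset.sum_eq_zero fun σ _ => ?_
  have := HG_prod φ (fun i => g (σ i)) (fun i => a (σ i)) (fun i => h _) i j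
    (by rwa [Equiv.sum_comp σ g])
  simp [this]

theorem HG_single {K G : Type} [Field K] [AddCommGroup G] {n : ℕ} (φ : Fin n → G)
    (i j : Fin n) : HG φ (φ j - φ i) (Matrix.single i j (1 : K)) := by
  intro k l h
  rw [Matrix.single_apply]
  rw [if_neg]
  rintro ⟨rfl, rfl⟩
  exact h rfl

/-- Diagonal matrices. -/
def diagSub (K : Type) [Field K] (n : ℕ) : Submodule K (Matrix (Fin n) (Fin n) K) where
  carrier := {b | ∀ i j, i ≠ j → b i j = 0}
  add_mem' := by
    intro a b ha hb i j h
    simp [ha i j h, hb i j h]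
  zero_mem' := by intro i j _; rfl
  smul_mem' := by
    intro c a ha i j h
    simp [ha i j h]

theorem vas_cast_inj {n : ℕ} {i j : Fin n} (h : ((j.val : ZMod n)) - (i.val : ZMod n) = 0) :
    i = j := by
  have h' := sub_eq_zero.1 h
  rw [ZMod.natCast_eq_natCast_iff'] at h'
  rw [Nat.mod_eq_of_lt j.2, Nat.mod_eq_of_lt i.2] at h'
  exact Fin.ext h'.symm

theorem S1_iff {K : Type} [Field K] (n : ℕ) {m : ℕ} (α : Equiv.Perm (Fin m) → K) :
    StmtS1 n α ↔ ∀ a : Fin m → Matrix (Fin n) (Fin n) K, mlEval α a ∈ diagSub K n := by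
  have key := fun (g : Fin m → ZMod n) (a : Fin m → Matrix (Fin n) (Fin n) K) h =>
    HG_eval (fun i : Fin n => (i.val : ZMod n)) α g a h
  constructor
  · intro h
    refine mlEval_mem α _ fun p => ?_
    by_cases hs : ∑ k, ((((p k).2.val : ZMod n)) - ((p k).1.val : ZMod n)) = 0
    · intro i j hij
      refine key _ _ (fun k => HG_single _ _ _) i j ?_
      rw [hs]
      exact fun h' => hij (vas_cast_inj h')
    · rw [h _ _ (fun k => HG_single (fun i : Fin n => (i.val : ZMod n)) (p k).1 (p k).2) hs]
      exact zero_mem _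
  · intro h g a ha hg
    ext i j
    by_cases hij : i = j
    · subst hij
      refine key g a ha i i ?_
      simpa using hg.symm
    · exact h a i j hij

theorem span_hom {K A : Type} [Field K] [Ring A] [Algebra K A] {m : ℕ}
    (α : Equiv.Perm (Fin m) → K) (φ : A →ₐ[K] A) (x : A)
    (hx : x ∈ Submodule.span K (mlImage α : Set A)) :
    φ x ∈ Submodule.span K (mlImage α : Set A) := by
  induction hx using Submodule.span_induction with
  | mem x hx =>
    obtain ⟨a, rfl⟩ := hx
    rw [mlEval_hom]
    exact Submodule.subset_span ⟨_, rfl⟩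
  | zero => simp
  | add x y _ _ hx hy => rw [map_add]; exact add_mem hx hy
  | smul c x _ hx => rw [map_smul]; exact Submodule.smul_mem _ _ hx

/-- Conjugation. -/
def conjHom {K A : Type} [Field K] [Ring A] [Algebra K A] (P Q : A) (h : P * Q = 1)
    (h' : Q * P = 1) : A →ₐ[K] A :=
  AlgHom.ofLinearMap
    { toFun := fun x => P * x * Q
      map_add' := by intro x y; simp [mul_add, add_mul]
      map_smul' := by intro c x; simp }
    (by simp [h])
    (by
      intro x y
      change P * (x * y) * Q = P * x * Q * (P * y * Q)
      calc P * (x * y) * Q = P * x * 1 * y * Q := by simp [mul_assoc]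
        _ = _ := by rw [← h']; simp only [mul_assoc])

theorem perm_exists {n : ℕ} (i j k l : Fin n) (hij : i ≠ j) (hkl : k ≠ l) :
    ∃ σ : Equiv.Perm (Fin n), σ i = k ∧ σ j = l := by
  refine ⟨Equiv.swap (Equiv.swap i k j) l * Equiv.swap i k, ?_, ?_⟩
  · simp only [Equiv.Perm.mul_apply, Equiv.swap_apply_left]
    apply Equiv.swap_apply_of_ne_of_ne _ hkl
    intro h
    have : Equiv.swap i k i = Equiv.swap i k j := by rw [← h]; simp
    exact hij ((Equiv.swap i k).injective this)
  · simp

theorem offdiag_single {K : Type} [Field K] (n : ℕ) {m : ℕ} (α : Equiv.Perm (Fin m) → K)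
    (h : ¬ StmtS1 n α) : ∃ i j : Fin n, i ≠ j ∧
      Matrix.single i j (1 : K) ∈ Submodule.span K (mlImage α : Set (Matrix (Fin n) (Fin n) K)) := by
  rw [S1_iff] at h
  have h2 : ¬ ∀ p : Fin m → Fin n × Fin n,
      mlEval α (fun k => Matrix.single (p k).1 (p k).2 (1 : K)) ∈ diagSub K n :=
    fun h' => h (mlEval_mem α _ h')
  push Not at h2
  obtain ⟨p, hp⟩ := h2
  have h3 : ∃ i j, i ≠ j ∧ mlEval α (fun k => Matrix.single (p k).1 (p k).2 (1 : K)) i j ≠ 0 := by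
    by_contra hc
    push Not at hc
    exact hp hc
  obtain ⟨i, j, hij, hne⟩ := h3
  refine ⟨i, j, hij, ?_⟩
  have key := HG_eval (fun i : Fin n => (Pi.single i 1 : Fin n → ℤ)) α _ _
    (fun k => HG_single (K := K) (fun i : Fin n => (Pi.single i 1 : Fin n → ℤ)) (p k).1 (p k).2)
  set b := mlEval α (fun k => Matrix.single (p k).1 (p k).2 (1 : K)) with hb
  have hc := not_imp_comm.1 (key i j) hne
  have hbe : b = b i j • Matrix.single i j (1 : K) := by
    ext k l
    rw [Matrix.smul_apply, Matrix.single_apply]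
    split_ifs with hkl
    · rw [hkl.1, hkl.2]; simp
    · rw [smul_zero]
      apply key
      rw [← hc]
      intro he
      apply hkl
      have e1 := congrFun he i
      have e2 := congrFun he j
      simp only [Pi.sub_apply, Pi.single_apply] at e1 e2
      constructor
      · by_contra hik
        simp [hik, hij] at e1
        split_ifs at e1 <;> omega
      · by_contra hjl
        simp [hjl, hij.symm] at e2
        split_ifs at e2 <;> omega
  have : Matrix.single i j (1 : K) = (b i j)⁻¹ • b := by
    conv_rhs => rw [hbe]
    rw [smul_smul]
    simp [hne]
  rw [this]
  exact Submodule.smul_mem _ _ (Submodule.subset_span ⟨_, rfl⟩)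

theorem all_single {K : Type} [Field K] (n : ℕ) {m : ℕ} (α : Equiv.Perm (Fin m) → K)
    (h : ¬ StmtS1 n α) (k l : Fin n) (hkl : k ≠ l) :
      Matrix.single k l (1 : K) ∈ Submodule.span K (mlImage α : Set (Matrix (Fin n) (Fin n) K)) := by
  obtain ⟨i, j, hij, hm⟩ := offdiag_single n α h
  obtain ⟨σ, rfl, rfl⟩ := perm_exists i j k l hij hkl
  have := span_hom α (Matrix.reindexAlgEquiv K K σ).toAlgHom _ hm
  convert this using 1
  ext a b
  simp [Matrix.single_apply, Equiv.eq_symm_apply]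

theorem diag_single {K : Type} [Field K] (n : ℕ) {m : ℕ} (α : Equiv.Perm (Fin m) → K)
    (h : ¬ StmtS1 n α) (i j : Fin n) :
      Matrix.single i i (1 : K) - Matrix.single j j (1 : K) ∈
        Submodule.span K (mlImage α : Set (Matrix (Fin n) (Fin n) K)) := by
  by_cases hij : i = j
  · subst hij; simp
  have h1 := all_single n α h i j hij
  have h2 := all_single n α h j i (Ne.symm hij)
  have hsq : Matrix.single j i (1 : K) * Matrix.single j i (1 : K) = 0 := by
    rw [Matrix.single_mul_single_of_ne]; exact hij
  have h3 := span_hom α (conjHom (1 + Matrix.single j i (1 : K)) (1 - Matrix.single j i (1 : K))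
    (by simp [mul_sub, add_mul, hsq]) (by simp [mul_add, sub_mul, hsq])) _ h1
  have h4 : conjHom (K := K) (1 + Matrix.single j i (1 : K)) (1 - Matrix.single j i (1 : K))
    (by simp [mul_sub, add_mul, hsq]) (by simp [mul_add, sub_mul, hsq])
      (Matrix.single i j (1 : K)) = Matrix.single i j (1 : K) + Matrix.single j j (1 : K)
        - Matrix.single i i (1 : K) - Matrix.single j i (1 : K) := by
    change (1 + Matrix.single j i (1 : K)) * Matrix.single i j (1 : K) *
      (1 - Matrix.single j i (1 : K)) = _
    simp [add_mul, mul_sub]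
    abel
  rw [h4] at h3
  have : Matrix.single i i (1 : K) - Matrix.single j j (1 : K) =
    Matrix.single i j (1 : K) - Matrix.single j i (1 : K) - (Matrix.single i j (1 : K) + Matrix.single j j (1 : K)
        - Matrix.single i i (1 : K) - Matrix.single j i (1 : K)) := by abel
  rw [this]
  exact sub_mem (sub_mem h1 h2) h3

/-- a multilinear polynomial fails (S1) and satisfies (S2) iff the linear span of
its image on `Mₙ(K)` equals `slₙ(K)`. -/
theorem stmt_7 {K : Type} [Field K] (n : ℕ) (hn : 2 ≤ n) {m : ℕ}
    (α : Equiv.Perm (Fin m) → K) :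
    (¬ StmtS1 n α ∧ StmtS2 n α) ↔
      (Submodule.span K (mlImage α : Set (Matrix (Fin n) (Fin n) K)) :
        Set (Matrix (Fin n) (Fin n) K)) = slSet K n := by
  constructor
  · rintro ⟨h1, h2⟩
    apply Set.Subset.antisymm
    · have hle : Submodule.span K (mlImage α : Set (Matrix (Fin n) (Fin n) K)) ≤
          LinearMap.ker (Matrix.traceLinearMap (Fin n) K K) := by
        rw [Submodule.span_le]
        rintro _ ⟨a, rfl⟩
        refine mlEval_mem α _ (fun p => ?_) a
        rw [LinearMap.mem_ker, Matrix.traceLinearMap_apply]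
        have hh := fun k => HG_single (K := K) (fun i : Fin n => (i.val : ZMod n)) (p k).1 (p k).2
        by_cases hs : ∑ k, ((((p k).2.val : ZMod n)) - ((p k).1.val : ZMod n)) = 0
        · exact h2 _ _ hh hs
        · refine Finset.sum_eq_zero fun i _ => ?_
          refine HG_eval _ α _ _ hh i i ?_
          simpa using Ne.symm hs
      intro x hx
      exact hle hx
    · intro b hb
      have hb' : Matrix.trace b = 0 := hb
      let z : Fin n := ⟨0, by omega⟩
      have e : b = ∑ i, ∑ j, b i j • (Matrix.single i j (1 : K) -
          if i = j then Matrix.single z z (1 : K) else 0) := by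
        simp only [smul_sub, Finset.sum_sub_distrib, smul_ite, smul_zero, Finset.sum_ite_eq,
          Finset.mem_univ, if_true]
        rw [← Finset.sum_smul]
        have : ∑ i, b i i = 0 := hb'
        rw [this, zero_smul, sub_zero]
        conv_lhs => rw [Matrix.matrix_eq_sum_single b]
        simp [Matrix.smul_single]
      rw [e]
      refine Submodule.sum_mem _ fun i _ => Submodule.sum_mem _ fun j _ =>
        Submodule.smul_mem _ _ ?_
      split_ifs with hij
      · subst hij
        exact diag_single n α h1 i z
      · rw [sub_zero]
        exact all_single n α h1 i j hij
  · intro h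
    constructor
    · intro h1
      rw [S1_iff] at h1
      have hle : Submodule.span K (mlImage α : Set (Matrix (Fin n) (Fin n) K)) ≤ diagSub K n := by
        rw [Submodule.span_le]
        rintro _ ⟨a, rfl⟩
        exact h1 a
      let z : Fin n := ⟨0, by omega⟩
      let o : Fin n := ⟨1, by omega⟩
      have hzo : z ≠ o := by simp [z, o]
      have hm : Matrix.single z o (1 : K) ∈ slSet K n := by
        change Matrix.trace _ = 0
        exact Matrix.trace_single_eq_of_ne z o _ hzo
      rw [← h] at hm
      have := hle hm z o hzo
      simp at this
    · intro g a _ _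
      have : mlEval α a ∈ slSet K n := by
        rw [← h]
        exact Submodule.subset_span ⟨a, rfl⟩
      exact this
end
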